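/- arXiv:1801.00431 — 2 statements merged into one kernel-verified Lean document; each statement's English description precedes it below -/
import Mathlib

section
/- For all real numbers c > 0 and d > 0, ∫₀^c x e^{-x - d/x} dx = Σ_{i=0}^∞ ((-1)^i c^{i+2} / i!) · Ei(i+3, d/c), where the series on the right converges. -/
open MeasureTheory Real

/-- Generalized exponential integral `Ei(n, s) = ∫₁^∞ e^{-s t} t^{-n} dt`. -/
noncomputable def Ei (n : ℕ) (s : ℝ) : ℝ :=
  ∫ t in Set.Ioi (1 : ℝ), Real.exp (-s * t) / t ^ n

theorem aux_cov (c d : ℝ) (hc : 0 < c) :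
    ∫ x in (0 : ℝ)..c, x * Real.exp (-x - d / x)
      = ∫ t in Set.Ioi (1 : ℝ), c ^ 2 * Real.exp (-(d / c) * t) / t ^ 3 * Real.exp (-c / t) := by
  have himg : (fun t : ℝ => c / t) '' Set.Ioi 1 = Set.Ioo 0 c := by
    ext x
    simp only [Set.mem_image, Set.mem_Ioi, Set.mem_Ioo]
    constructor
    · rintro ⟨t, ht, rfl⟩
      exact ⟨by positivity, div_lt_self hc ht⟩
    · rintro ⟨h0, h1⟩
      exact ⟨c / x, (one_lt_div h0).2 h1, by field_simp⟩
  have hder : ∀ t ∈ Set.Ioi (1 : ℝ),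
      HasDerivWithinAt (fun t : ℝ => c / t) (-c / t ^ 2) (Set.Ioi 1) t := by
    intro t ht
    have ht0 : t ≠ 0 := by
      have : (1 : ℝ) < t := ht
      positivity
    have := ((hasDerivAt_inv ht0).const_mul c).hasDerivWithinAt (s := Set.Ioi 1)
    have e : -c / t ^ 2 = c * -(t ^ 2)⁻¹ := by ring
    rw [e]
    exact this
  have hinj : Set.InjOn (fun t : ℝ => c / t) (Set.Ioi 1) := by
    intro a ha b hb h
    have ha' : (1 : ℝ) < a := ha
    have hb' : (1 : ℝ) < b := hb
    have h' : c / a = c / b := h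
    rw [div_eq_div_iff (by positivity) (by positivity)] at h'
    exact (mul_left_cancel₀ hc.ne' h').symm
  rw [intervalIntegral.integral_of_le hc.le, integral_Ioc_eq_integral_Ioo, ← himg,
    integral_image_eq_integral_abs_deriv_smul measurableSet_Ioi hder hinj]
  refine setIntegral_congr_fun measurableSet_Ioi ?_
  intro t ht
  have ht' : (1 : ℝ) < t := ht
  have ht0 : 0 < t := by linarith
  have e : -(c / t) - d / (c / t) = -(d / c) * t + -c / t := by
    field_simp
    ring
  have ha : |(-c / t ^ 2)| = c / t ^ 2 := by
    rw [neg_div, abs_neg, abs_of_pos (by positivity)]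
  simp only [smul_eq_mul]
  rw [ha, e, Real.exp_add]
  field_simp

theorem aux_hasSum (c d : ℝ) (hc : 0 < c) (hd : 0 < d) :
    HasSum (fun i : ℕ =>
      (-1 : ℝ) ^ i * c ^ (i + 2) / (Nat.factorial i) * Ei (i + 3) (d / c))
    (∫ x in (0 : ℝ)..c, x * Real.exp (-x - d / x)) := by
  rw [aux_cov c d hc]
  have hs : ∀ t : ℝ, HasSum (fun i : ℕ => c ^ (i + 2) / (Nat.factorial i) * Real.exp (-(d / c) * t))
      (c ^ 2 * Real.exp c * Real.exp (-(d / c) * t)) := by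
    intro t
    have h := NormedSpace.expSeries_div_hasSum_exp (𝔸 := ℝ) c
    rw [← Real.exp_eq_exp_ℝ] at h
    have h2 := (h.mul_left (c ^ 2)).mul_right (Real.exp (-(d / c) * t))
    refine (congrArg (fun F : ℕ → ℝ => HasSum F _) ?_).mpr h2
    funext i
    ring
  have hint := exp_neg_integrableOn_Ioi 1 (div_pos hd hc)
  simp only [Ei, ← integral_const_mul]
  refine hasSum_integral_of_dominated_convergence
    (fun i t => c ^ (i + 2) / (Nat.factorial i) * Real.exp (-(d / c) * t)) ?_ ?_ ?_ ?_ ?_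
  · intro i
    exact Measurable.aestronglyMeasurable (by fun_prop)
  · intro i
    filter_upwards [ae_restrict_mem measurableSet_Ioi] with t ht
    have ht' : (1 : ℝ) < t := ht
    have ht0 : 0 < t := by linarith
    rw [norm_mul, norm_div, norm_mul, norm_pow, norm_neg, norm_one, one_pow, one_mul,
      Real.norm_of_nonneg (by positivity), Real.norm_of_nonneg (by positivity),
      Real.norm_of_nonneg (by positivity)]
    gcongr
    exact div_le_self (Real.exp_pos _).le (one_le_pow₀ ht'.le)
  · exact ae_of_all _ fun t => (hs t).summable
  · simp only [fun t => (hs t).tsum_eq]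
    exact hint.const_mul _
  · filter_upwards [ae_restrict_mem measurableSet_Ioi] with t ht
    have ht' : (1 : ℝ) < t := ht
    have ht0 : 0 < t := by linarith
    have h := NormedSpace.expSeries_div_hasSum_exp (𝔸 := ℝ) (-c / t)
    rw [← Real.exp_eq_exp_ℝ] at h
    have h2 := h.mul_left (c ^ 2 * Real.exp (-(d / c) * t) / t ^ 3)
    refine (congrArg (fun F : ℕ → ℝ => HasSum F _) ?_).mpr h2
    funext i
    rw [div_pow, neg_pow c]
    field_simp
    ring

theorem stmt_3 (c d : ℝ) (hc : 0 < c) (hd : 0 < d) :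
    Summable (fun i : ℕ =>
      (-1 : ℝ) ^ i * c ^ (i + 2) / (Nat.factorial i) * Ei (i + 3) (d / c)) ∧
    ∫ x in (0 : ℝ)..c, x * Real.exp (-x - d / x)
      = ∑' i : ℕ, (-1 : ℝ) ^ i * c ^ (i + 2) / (Nat.factorial i) * Ei (i + 3) (d / c) :=  by
  exact ⟨(aux_hasSum c d hc hd).summable, (aux_hasSum c d hc hd).tsum_eq.symm⟩
end

section
/- For every real number z > 0, the function F(z) = -(z/2) ∫₀^∞ t^{-2} e^{-t - z/t} dt is differentiable at z with derivative F'(z) = (1/2) ∫₀^∞ t^{-1} e^{-t - z/t} dt. (Equivalently, z ↦ -√z K₁(2√z) is an antiderivative of z ↦ K₀(2√z) on (0, ∞).) -/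
open MeasureTheory Real

lemma aux_bnd (n : ℕ) (a t : ℝ) (ha : 0 < a) (ht : 0 < t) :
    (t⁻¹) ^ n * Real.exp (-t - a / t) ≤ (n.factorial : ℝ) / a ^ n * Real.exp (-t) := by
  have h := Real.pow_div_factorial_le_exp (a / t) (by positivity) n
  have hf : (0 : ℝ) < n.factorial := by exact_mod_cast Nat.factorial_pos n
  have e : Real.exp (-t - a / t) = Real.exp (-t) * (Real.exp (a / t))⁻¹ := by
    rw [← Real.exp_neg, ← Real.exp_add]; rfl
  rw [e]
  have hp := Real.exp_pos (a / t)
  have h2 : (t⁻¹) ^ n * (Real.exp (a / t))⁻¹ ≤ (n.factorial : ℝ) / a ^ n := by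
    rw [← div_eq_mul_inv, div_le_div_iff₀ hp (by positivity)]
    rw [div_le_iff₀ hf] at h
    calc (t⁻¹) ^ n * a ^ n = (a / t) ^ n := by rw [← mul_pow, div_eq_mul_inv, mul_comm]
      _ ≤ _ := by linarith
  calc _ = ((t⁻¹) ^ n * (Real.exp (a / t))⁻¹) * Real.exp (-t) := by ring
    _ ≤ _ := by gcongr

lemma aux_meas (n : ℕ) (a : ℝ) (μ : Measure ℝ) :
    AEStronglyMeasurable (fun t : ℝ => (t⁻¹) ^ n * Real.exp (-t - a / t)) μ := by
  apply Measurable.aestronglyMeasurable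
  fun_prop

lemma aux_expint (c : ℝ) :
    IntegrableOn (fun t : ℝ => c * Real.exp (-t)) (Set.Ioi 0) :=
  (integrableOn_exp_neg_Ioi 0).const_mul c

lemma aux_int (n : ℕ) (a : ℝ) (ha : 0 < a) :
    IntegrableOn (fun t : ℝ => (t⁻¹) ^ n * Real.exp (-t - a / t)) (Set.Ioi 0) := by
  refine Integrable.mono' (aux_expint ((n.factorial : ℝ) / a ^ n)) (aux_meas n a _) ?_
  filter_upwards [ae_restrict_mem measurableSet_Ioi] with t ht
  have ht : 0 < t := ht
  rw [Real.norm_of_nonneg (by positivity)]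
  exact aux_bnd n a t ha ht

lemma aux_deriv (n : ℕ) (z : ℝ) (hz : 0 < z) :
    HasDerivAt (fun z : ℝ => ∫ t in Set.Ioi (0 : ℝ), (t⁻¹) ^ n * Real.exp (-t - z / t))
      (∫ t in Set.Ioi (0 : ℝ), -((t⁻¹) ^ (n + 1) * Real.exp (-t - z / t))) z := by
  refine (hasDerivAt_integral_of_dominated_loc_of_deriv_le (s := Set.Ioi (z / 2))
    (bound := fun t => (t⁻¹) ^ (n + 1) * Real.exp (-t - (z / 2) / t))
    (F' := fun z t => -((t⁻¹) ^ (n + 1) * Real.exp (-t - z / t)))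
    (Ioi_mem_nhds (by linarith)) (Filter.Eventually.of_forall fun x => aux_meas n x _)
    (aux_int n z hz) (aux_meas (n + 1) z _).neg ?_ (aux_int (n + 1) _ (by linarith)) ?_).2
  · filter_upwards [ae_restrict_mem measurableSet_Ioi] with t ht x hx
    have ht : 0 < t := ht
    have hx : z / 2 < x := hx
    rw [norm_neg, Real.norm_of_nonneg (by positivity)]
    gcongr
  · refine Filter.Eventually.of_forall fun t x _ => ?_
    have h := (((hasDerivAt_id x).div_const t).const_sub (-t)).exp.const_mul ((t⁻¹) ^ n)
    refine h.congr_deriv ?_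
    simp only [id]
    ring

lemma aux_ibp (z : ℝ) (hz : 0 < z) :
    ∫ t in Set.Ioi (0 : ℝ), (z * ((t⁻¹) ^ 3 * Real.exp (-t - z / t))
      - (t⁻¹) ^ 2 * Real.exp (-t - z / t) - (t⁻¹) ^ 1 * Real.exp (-t - z / t)) = 0 := by
  have key := integral_Ioi_of_hasDerivAt_of_tendsto (a := (0 : ℝ)) (m := 0)
    (f := fun t : ℝ => t⁻¹ * Real.exp (-t - z / t))
    (f' := fun t => (z * ((t⁻¹) ^ 3 * Real.exp (-t - z / t))
      - (t⁻¹) ^ 2 * Real.exp (-t - z / t) - (t⁻¹) ^ 1 * Real.exp (-t - z / t))) ?_ ?_ ?_ ?_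
  · simpa using key
  · have h0 : Filter.Tendsto (fun t : ℝ => t * (2 / z ^ 2 * Real.exp (-t)))
        (nhdsWithin 0 (Set.Ici 0)) (nhds 0) := by
      have : Continuous (fun t : ℝ => t * (2 / z ^ 2 * Real.exp (-t))) := by fun_prop
      have := (this.tendsto 0).mono_left (nhdsWithin_le_nhds (s := Set.Ici 0))
      simpa using this
    unfold ContinuousWithinAt
    simp only [inv_zero, zero_mul]
    refine tendsto_of_tendsto_of_tendsto_of_le_of_le' tendsto_const_nhds h0 ?_ ?_
    · filter_upwards [self_mem_nhdsWithin] with t ht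
      have ht : 0 ≤ t := ht
      positivity
    · filter_upwards [self_mem_nhdsWithin] with t ht
      rcases (show (0 : ℝ) ≤ t from ht).eq_or_lt with rfl | ht
      · simp
      · have := aux_bnd 2 z t hz ht
        have h3 := mul_le_mul_of_nonneg_left this ht.le
        simp only [Nat.factorial] at h3
        calc _ = t * ((t⁻¹) ^ 2 * Real.exp (-t - z / t)) := by field_simp
          _ ≤ _ := by simpa using h3
  · intro t ht
    have ht : t ≠ 0 := (show (0 : ℝ) < t from ht).ne'
    have h := (hasDerivAt_inv ht).mul
      (((hasDerivAt_id t).neg.sub ((hasDerivAt_inv ht).const_mul z)).exp)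
    have h' : HasDerivAt (fun t : ℝ => t⁻¹ * Real.exp (-t - z * t⁻¹)) _ t := h
    simp only [div_eq_mul_inv]
    refine h'.congr_deriv ?_
    simp only [id, Pi.sub_apply, Pi.neg_apply]
    field_simp
    ring
  · exact (((aux_int 3 z hz).const_mul z).sub (aux_int 2 z hz)).sub (aux_int 1 z hz)
  · have h0 : Filter.Tendsto (fun t : ℝ => 1 / z * Real.exp (-t)) Filter.atTop (nhds 0) := by
      simpa using Real.tendsto_exp_neg_atTop_nhds_zero.const_mul (1 / z)
    refine tendsto_of_tendsto_of_tendsto_of_le_of_le' tendsto_const_nhds h0 ?_ ?_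
    · filter_upwards [Filter.eventually_gt_atTop 0] with t ht
      positivity
    · filter_upwards [Filter.eventually_gt_atTop 0] with t ht
      simpa using aux_bnd 1 z t hz ht

theorem stmt_12 (z : ℝ) (hz : 0 < z) :
    HasDerivAt
      (fun z : ℝ => -(z / 2) * ∫ t in Set.Ioi (0 : ℝ), t ^ (-2 : ℤ) * Real.exp (-t - z / t))
      ((1 / 2) * ∫ t in Set.Ioi (0 : ℝ), t⁻¹ * Real.exp (-t - z / t)) z := by
  have e : ∀ t : ℝ, t ^ (-2 : ℤ) = (t⁻¹) ^ 2 := by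
    intro t
    rw [zpow_neg, inv_pow]; rfl
  simp only [e]
  have h := ((hasDerivAt_id z).div_const 2).neg.mul (aux_deriv 2 z hz)
  have k := aux_ibp z hz
  have i1 := aux_int 1 z hz
  have i2 := aux_int 2 z hz
  have i3 := (aux_int 3 z hz).const_mul z
  have i32 : Integrable (fun t : ℝ => z * ((t⁻¹) ^ 3 * Real.exp (-t - z / t))
      - (t⁻¹) ^ 2 * Real.exp (-t - z / t)) (volume.restrict (Set.Ioi 0)) := i3.sub i2
  rw [integral_sub i32 i1, integral_sub i3 i2, integral_const_mul] at k
  simp only [pow_one] at k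
  refine h.congr_deriv ?_
  rw [integral_neg]
  simp only [id, Pi.neg_apply, Nat.reduceAdd]
  linarith
end
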